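/- Let n and k be positive integers with k ≥ 2, let G be a graph with χ_P(G) = k and |V(G)| = n, and let m ≥ n+k+2. If there exists a special enumeration of V(G), then χ_P(R_m(G)) = k; otherwise χ_P(R_m(G)) = k+1. -/

import Mathlib

open SimpleGraph

universe u
variable {V : Type u}

/-- Closed neighborhood of a vertex set. -/
def closedNbhd (G : SimpleGraph V) (U : Set V) : Set V :=
  U ∪ {v | ∃ u ∈ U, G.Adj u v}

/-- Bag `X_ℓ = N[{v_1,…,v_ℓ}] \ {v_1,…,v_{ℓ-1}}` of the enumeration `σ`. -/
def bagX {n : ℕ} (G : SimpleGraph V) (σ : Fin n ≃ V) (ℓ : Fin n) : Set V :=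
  closedNbhd G {v | ∃ j ≤ ℓ, v = σ j} \ {v | ∃ j < ℓ, v = σ j}

/-- Chromatic number of the subgraph induced by `S`. -/
noncomputable def chrom (G : SimpleGraph V) (S : Set V) : ℕ :=
  sInf {k | (G.induce S).Colorable k}

/-- Chromatic number of the path-decomposition `P_σ^G`. -/
noncomputable def decompChrom {n : ℕ} (G : SimpleGraph V) (σ : Fin n ≃ V) : ℕ :=
  sInf {k | ∀ ℓ, (G.induce (bagX G σ ℓ)).Colorable k}

/-- `B` is a path-decomposition of `G`. -/
def IsPathDecomp (G : SimpleGraph V) {s : ℕ} (B : Fin s → Set V) : Prop :=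
  (∀ v, ∃ t, v ∈ B t) ∧
  (∀ u v, G.Adj u v → ∃ t, u ∈ B t ∧ v ∈ B t) ∧
  (∀ v (t₁ t₂ t₃ : Fin s), t₁ ≤ t₂ → t₂ ≤ t₃ → v ∈ B t₁ → v ∈ B t₃ → v ∈ B t₂)

/-- Path-chromatic number. -/
noncomputable def pathChromatic (G : SimpleGraph V) : ℕ :=
  sInf {k | ∃ (s : ℕ) (B : Fin s → Set V), IsPathDecomp G B ∧
    ∀ t, (G.induce (B t)).Colorable k}

/-- `(T, B)` is a tree-decomposition of `G`. -/
def IsTreeDecomp {ι : Type u} (G : SimpleGraph V) (T : SimpleGraph ι) (B : ι → Set V) : Prop :=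
  T.IsTree ∧
  (∀ v, ∃ t, v ∈ B t) ∧
  (∀ u v, G.Adj u v → ∃ t, u ∈ B t ∧ v ∈ B t) ∧
  (∀ v, (T.induce {t | v ∈ B t}).Connected)

/-- Tree-chromatic number. -/
noncomputable def treeChromatic (G : SimpleGraph V) : ℕ :=
  sInf {k | ∃ (ι : Type u) (T : SimpleGraph ι) (B : ι → Set V),
    IsTreeDecomp G T B ∧ ∀ t, (G.induce (B t)).Colorable k}

/-- A special enumeration. -/
def IsSpecial {n : ℕ} (G : SimpleGraph V) (σ : Fin n ≃ V) : Prop :=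
  decompChrom G σ = pathChromatic G ∧
  ∀ i : Fin n, chrom G (bagX G σ i) = pathChromatic G →
    ∀ j : Fin n, j < i → ¬ G.Adj (σ j) (σ i)

/-- The graph `R_m(G)`; the vertex `(i, none)` plays the role of `(i, v₀)`. -/
def Rm (G : SimpleGraph V) (m : ℕ) : SimpleGraph (Fin m × Option V) :=
  SimpleGraph.fromRel (fun p q =>
    (p.1 = q.1 ∧ p.2 = none) ∨
    (p.1 ≠ q.1 ∧ ∃ u v, p.2 = some u ∧ q.2 = some v ∧ G.Adj u v))

/-- `[I, U] = { (i, v) : i ∈ I, v ∈ U }` inside `R_m(G)`. -/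
def box {m : ℕ} (I : Set (Fin m)) (U : Set V) : Set (Fin m × Option V) :=
  {p | p.1 ∈ I ∧ ∃ v ∈ U, p.2 = some v}

/-- Index of the first vertex in the enumeration `μ` satisfying `P`. -/
noncomputable def firstIdx {N : ℕ} {W : Type*} (μ : Fin N ≃ W) (P : W → Prop) : ℕ :=
  sInf {ℓ : ℕ | ∃ h : ℓ < N, P (μ ⟨ℓ, h⟩)}

/-- The cycle `C_n`: `v_j ~ v_{j'}` iff `|j - j'| ∈ {1, n-1}`. -/
def cyc (n : ℕ) : SimpleGraph (Fin n) :=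
  SimpleGraph.fromRel (fun a b => (b : ℕ) - (a : ℕ) = 1 ∨ (b : ℕ) - (a : ℕ) = n - 1)

/-- The Mycielskian of a graph. -/
def mycielskian (G : SimpleGraph V) : SimpleGraph (Option (V ⊕ V)) :=
  SimpleGraph.fromRel (fun a b =>
    match a, b with
    | some (Sum.inl u), some (Sum.inl v) => G.Adj u v
    | some (Sum.inr u), some (Sum.inl v) => G.Adj u v
    | none, some (Sum.inr _) => True
    | _, _ => False)

/-- Vertex types and graphs of the Mycielski family: `MycS 2` is a single edge. -/
def MycS : ℕ → Σ W : Type, SimpleGraph W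
  | 0 => ⟨Empty, ⊥⟩
  | 1 => ⟨Empty, ⊥⟩
  | 2 => ⟨Fin 2, ⊤⟩
  | (n + 3) => ⟨Option ((MycS (n + 2)).1 ⊕ (MycS (n + 2)).1), mycielskian (MycS (n + 2)).2⟩

/-- The vertex type of the `k`-Mycielski graph. -/
def MycV (k : ℕ) : Type := (MycS k).1

/-- The `k`-Mycielski graph `M_k`. -/
def Myc (k : ℕ) : SimpleGraph (MycV k) := (MycS k).2

/-! Call `v_b` *late* in an enumeration if it has an earlier neighbour. If `χ_P(G) = c + 1`, the
enumeration is special exactly when the bag `X_ℓ` of every late `v_ℓ` is `c`-colourable, since the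
late vertices of any `X_ℓ` all lie in the bag of the first of them.

Given such an enumeration, replace `X_ℓ` by `m` consecutive bags, each containing all copies of the
late vertices of `X_ℓ`, and only one copy of `v_ℓ` if `v_ℓ` is not late. Adding all the roots
`(i, v₀)` to every bag costs only one colour.

Conversely, given a decomposition of `R_m(G)`, order `V(G)` by the first time at which a copy of the
vertex disappears. For a late `v_ℓ`, all but `ℓ + 1` of the copies of `X_ℓ` then share a bag, and
some bag contains many copies of `X_ℓ` together with one of their roots. A vertex with more copies
than there are colours has a colour appearing on two copies, and such a colour appears on no copy
of a neighbour. Choosing repeated colours where possible, one can avoid the colour of the root. -/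

/-! ### Path-colourability and chromatic numbers -/

/-- `G` has a path-decomposition with `k`-colourable bags; for finite `G` this is `χ_P(G) ≤ k`. -/
def PathColorable (G : SimpleGraph V) (k : ℕ) : Prop :=
  ∃ (s : ℕ) (B : Fin s → Set V), IsPathDecomp G B ∧ ∀ t, (G.induce (B t)).Colorable k

theorem PathColorable.mono {G : SimpleGraph V} {k l : ℕ} (hkl : k ≤ l) (h : PathColorable G k) :
    PathColorable G l := by
  obtain ⟨s, B, hB, hcol⟩ := h
  exact ⟨s, B, hB, fun t => (hcol t).mono hkl⟩

theorem pathColorable_card [Fintype V] (G : SimpleGraph V) :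
    PathColorable G (Fintype.card V) :=
  ⟨1, fun _ => Set.univ, ⟨fun _ => ⟨0, trivial⟩, fun _ _ _ => ⟨0, trivial, trivial⟩,
    fun _ _ _ _ _ _ _ _ => trivial⟩,
    fun _ => G.colorable_of_fintype.of_hom (Embedding.induce Set.univ).toHom⟩

theorem IsPathDecomp.comap {W : Type*} {G : SimpleGraph V} {H : SimpleGraph W} {s : ℕ}
    {B : Fin s → Set W} (hB : IsPathDecomp H B) (f : G →g H) :
    IsPathDecomp G fun t => f ⁻¹' B t :=
  ⟨fun v => hB.1 (f v), fun _ _ huv => hB.2.1 _ _ (f.map_adj huv), fun v => hB.2.2 (f v)⟩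

theorem PathColorable.of_hom {W : Type*} {G : SimpleGraph V} {H : SimpleGraph W} {k : ℕ}
    (h : PathColorable H k) (f : G →g H) : PathColorable G k := by
  obtain ⟨s, B, hB, hcol⟩ := h
  exact ⟨s, _, hB.comap f, fun t => (hcol t).of_hom (induceHom f (Set.mapsTo_preimage f (B t)))⟩

theorem colorable_induce_mono {G : SimpleGraph V} {S T : Set V} {k : ℕ} (hST : S ⊆ T)
    (h : (G.induce T).Colorable k) : (G.induce S).Colorable k :=
  h.of_hom (G.induceHomOfLE hST).toHom

theorem colorable_induce_insert {G : SimpleGraph V} {S : Set V} {k : ℕ}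
    (h : (G.induce S).Colorable k) (v : V) : (G.induce (insert v S)).Colorable (k + 1) := by
  classical
  obtain ⟨C⟩ := h
  let D : (G.induce (insert v S)).Coloring (Option (Fin k)) := Coloring.mk
    (fun w => if hw : w.1 ∈ S then some (C ⟨w, hw⟩) else none) <| by
      rintro ⟨x, hx⟩ ⟨y, hy⟩ hxy
      have hxy : G.Adj x y := hxy
      by_cases hxS : x ∈ S <;> by_cases hyS : y ∈ S
      · simpa [hxS, hyS] using C.valid (show (G.induce S).Adj ⟨x, hxS⟩ ⟨y, hyS⟩ from hxy)
      · simp [hxS, hyS]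
      · simp [hxS, hyS]
      · exact absurd ((hx.resolve_right hxS).trans (hy.resolve_right hyS).symm) hxy.ne
  simpa using D.colorable

theorem sInf_le_iff_mem_of_upward_closed {s : Set ℕ} (hne : s.Nonempty)
    (hs : ∀ k l, k ≤ l → k ∈ s → l ∈ s) {k : ℕ} : sInf s ≤ k ↔ k ∈ s := by
  conv_rhs => rw [Nat.eq_Ici_of_nonempty_of_upward_closed hne hs]
  rfl

theorem pathChromatic_le_iff [Finite V] {G : SimpleGraph V} {k : ℕ} :
    pathChromatic G ≤ k ↔ PathColorable G k := by
  have := Fintype.ofFinite V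
  exact sInf_le_iff_mem_of_upward_closed ⟨_, pathColorable_card G⟩ fun _ _ => PathColorable.mono

theorem chrom_le_iff [Finite V] {G : SimpleGraph V} {S : Set V} {k : ℕ} :
    chrom G S ≤ k ↔ (G.induce S).Colorable k := by
  have := Fintype.ofFinite S
  exact sInf_le_iff_mem_of_upward_closed ⟨_, colorable_of_fintype _⟩ fun _ _ hkl h => h.mono hkl

/-! ### Special enumerations -/

section Enumeration

variable {n : ℕ} {G : SimpleGraph V} {σ : Fin n ≃ V}

theorem apply_mem_bagX_iff {ℓ b : Fin n} :
    σ b ∈ bagX G σ ℓ ↔ ℓ ≤ b ∧ (b = ℓ ∨ ∃ a ≤ ℓ, G.Adj (σ a) (σ b)) := by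
  simp only [bagX, closedNbhd, Set.mem_sdiff, Set.mem_union, Set.mem_ofPred_eq,
    EmbeddingLike.apply_eq_iff_eq, exists_eq_right', not_lt]
  grind

theorem apply_mem_bagX_self (ℓ : Fin n) : σ ℓ ∈ bagX G σ ℓ :=
  apply_mem_bagX_iff.2 ⟨le_rfl, Or.inl rfl⟩

variable (G σ) in
theorem isPathDecomp_bagX : IsPathDecomp G (bagX G σ) := by
  refine ⟨σ.forall_congr_right.1 fun b => ⟨b, apply_mem_bagX_self b⟩, ?_, ?_⟩
  · refine σ.forall_congr_right.1 fun a => σ.forall_congr_right.1 fun b hab => ?_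
    rcases le_total a b with h | h
    · exact ⟨a, apply_mem_bagX_self a, apply_mem_bagX_iff.2 ⟨h, Or.inr ⟨a, le_rfl, hab⟩⟩⟩
    · exact ⟨b, apply_mem_bagX_iff.2 ⟨h, Or.inr ⟨b, le_rfl, hab.symm⟩⟩, apply_mem_bagX_self b⟩
  · refine σ.forall_congr_right.1 fun b t₁ t₂ t₃ h₁₂ h₂₃ h₁ h₃ => ?_
    rw [apply_mem_bagX_iff] at h₁ h₃ ⊢
    refine ⟨h₂₃.trans h₃.1, h₁.2.imp (fun h => ?_) fun ⟨a, ha, hab⟩ => ⟨a, ha.trans h₁₂, hab⟩⟩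
    exact le_antisymm (h.trans_le h₁₂) (h₂₃.trans h₃.1)

theorem colorable_bagX_sub (ℓ : Fin n) : (G.induce (bagX G σ ℓ)).Colorable (n - ℓ) := by
  have hle (v : bagX G σ ℓ) : ℓ ≤ σ.symm v :=
    (apply_mem_bagX_iff.1 ((σ.apply_symm_apply v).symm ▸ v.2)).1
  let C : (G.induce (bagX G σ ℓ)).Coloring (Set.Ici ℓ) := Coloring.mk
    (fun v => ⟨σ.symm v, hle v⟩) fun huv h =>
      huv.ne (Subtype.ext (σ.symm.injective (congrArg Subtype.val h)))
  simpa using C.colorable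

theorem decompChrom_le_iff {k : ℕ} :
    decompChrom G σ ≤ k ↔ ∀ ℓ, (G.induce (bagX G σ ℓ)).Colorable k :=
  sInf_le_iff_mem_of_upward_closed (s := {k | ∀ ℓ, (G.induce (bagX G σ ℓ)).Colorable k})
    ⟨n, fun ℓ => (colorable_bagX_sub ℓ).mono (Nat.sub_le n ℓ)⟩
    fun _ _ hkl h ℓ => (h ℓ).mono hkl

theorem pathChromatic_le_decompChrom : pathChromatic G ≤ decompChrom G σ :=
  Nat.sInf_le ⟨n, bagX G σ, isPathDecomp_bagX G σ, decompChrom_le_iff.1 le_rfl⟩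

variable (G σ) in
/-- The vertex `v_b` of the enumeration `σ` has a neighbour among the vertices before it. -/
def IsLate (b : Fin n) : Prop := ∃ a < b, G.Adj (σ a) (σ b)

theorem IsLate.exists_adj_of_mem_bagX {ℓ b : Fin n} (hℓ : IsLate G σ ℓ)
    (hb : σ b ∈ bagX G σ ℓ) : ∃ a ≤ ℓ, G.Adj (σ a) (σ b) := by
  obtain ⟨-, rfl | hadj⟩ := apply_mem_bagX_iff.1 hb
  · exact hℓ.imp fun a ha => ⟨ha.1.le, ha.2⟩
  · exact hadj

theorem isLate_of_mem_bagX {ℓ b : Fin n} (hb : σ b ∈ bagX G σ ℓ) (hne : b ≠ ℓ) :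
    IsLate G σ b := by
  obtain ⟨hle, h⟩ := apply_mem_bagX_iff.1 hb
  obtain ⟨a, ha, hab⟩ := h.resolve_left hne
  exact ⟨a, ha.trans_lt (lt_of_le_of_ne hle hne.symm), hab⟩

variable (G σ) in
/-- The late vertices of the bag `X_ℓ`. -/
def lateBag (ℓ : Fin n) : Set V := {v ∈ bagX G σ ℓ | IsLate G σ (σ.symm v)}

theorem bagX_subset_insert_lateBag (ℓ : Fin n) :
    bagX G σ ℓ ⊆ insert (σ ℓ) (lateBag G σ ℓ) := by
  refine σ.forall_congr_right.1 fun b hb => ?_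
  by_cases h : b = ℓ
  · exact Or.inl (congrArg σ h)
  · exact Or.inr ⟨hb, by simpa using isLate_of_mem_bagX hb h⟩

theorem exists_isLate_lateBag_subset {ℓ : Fin n} (h : (lateBag G σ ℓ).Nonempty) :
    ∃ p, IsLate G σ p ∧ lateBag G σ ℓ ⊆ bagX G σ p := by
  have : Finite V := Finite.of_equiv _ σ
  obtain ⟨v, ⟨hv, hlate⟩, hmin⟩ := Set.exists_min_image _ σ.symm (Set.toFinite _) h
  refine ⟨σ.symm v, hlate, σ.forall_congr_right.1 fun b hb => ?_⟩
  have hle : σ.symm v ≤ b := by simpa using hmin _ hb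
  have hℓ : ℓ ≤ σ.symm v := (apply_mem_bagX_iff.1 ((σ.apply_symm_apply v).symm ▸ hv)).1
  obtain ⟨hℓb, rfl | ⟨a, ha, hab⟩⟩ := apply_mem_bagX_iff.1 hb.1
  · exact apply_mem_bagX_iff.2 ⟨hle, Or.inl (le_antisymm hℓ hle)⟩
  · exact apply_mem_bagX_iff.2 ⟨hle, Or.inr ⟨a, ha.trans hℓ, hab⟩⟩

theorem colorable_lateBag {c : ℕ} (h : ∀ p, IsLate G σ p → (G.induce (bagX G σ p)).Colorable c)
    (ℓ : Fin n) : (G.induce (lateBag G σ ℓ)).Colorable c := by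
  rcases (lateBag G σ ℓ).eq_empty_or_nonempty with hempty | hne
  · rw [hempty]
    exact Colorable.of_isEmpty c
  · obtain ⟨p, hp, hsub⟩ := exists_isLate_lateBag_subset hne
    exact colorable_induce_mono hsub (h p hp)

theorem isSpecial_iff {c : ℕ} (hG : pathChromatic G = c + 1) :
    IsSpecial G σ ↔ ∀ ℓ, IsLate G σ ℓ → (G.induce (bagX G σ ℓ)).Colorable c := by
  have : Finite V := Finite.of_equiv _ σ
  rw [IsSpecial, hG]
  refine ⟨fun ⟨hdecomp, hspecial⟩ ℓ ⟨a, ha, hadj⟩ => ?_, fun h => ⟨?_, fun ℓ hℓ a ha hadj => ?_⟩⟩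
  · have hle : chrom G (bagX G σ ℓ) ≤ c + 1 := chrom_le_iff.2 (decompChrom_le_iff.1 hdecomp.le ℓ)
    have hne : chrom G (bagX G σ ℓ) ≠ c + 1 := fun heq => hspecial ℓ heq a ha hadj
    exact chrom_le_iff.1 (by omega)
  · refine le_antisymm (decompChrom_le_iff.2 fun ℓ => ?_) (hG ▸ pathChromatic_le_decompChrom)
    exact colorable_induce_mono (bagX_subset_insert_lateBag ℓ)
      (colorable_induce_insert (colorable_lateBag h ℓ) (σ ℓ))
  · have hle : chrom G (bagX G σ ℓ) ≤ c := chrom_le_iff.2 (h ℓ ⟨a, ha, hadj⟩)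
    omega

end Enumeration

/-! ### Copies and roots in `R_m(G)` -/

section Rm

variable {G : SimpleGraph V} {m : ℕ}

theorem not_Rm_adj_none_none {i j : Fin m} : ¬ (Rm G m).Adj (i, none) (j, none) := by
  simp only [Rm, fromRel_adj]
  grind

theorem Rm_adj_none_some {i j : Fin m} {v : V} :
    (Rm G m).Adj (i, none) (j, some v) ↔ i = j := by
  simp [Rm]

theorem Rm_adj_some_none {i j : Fin m} {v : V} :
    (Rm G m).Adj (i, some v) (j, none) ↔ i = j := by
  rw [adj_comm, Rm_adj_none_some, eq_comm]

theorem Rm_adj_some_some {i j : Fin m} {u v : V} :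
    (Rm G m).Adj (i, some u) (j, some v) ↔ i ≠ j ∧ G.Adj u v := by
  have := G.adj_comm u v
  simp only [Rm, fromRel_adj]
  grind

variable (G m) in
/-- The subgraph of `R_m(G)` on the copies `(i, v)` of the vertices of `G`, without the roots
`(i, v₀)`. -/
def copyGraph : SimpleGraph (Fin m × V) := (Rm G m).comap (Prod.map id some)

theorem copyGraph_adj {i j : Fin m} {u v : V} :
    (copyGraph G m).Adj (i, u) (j, v) ↔ i ≠ j ∧ G.Adj u v :=
  Rm_adj_some_some

variable (G m) in
/-- The projection of the copies to `G`. -/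
def copyGraph.snd : copyGraph G m →g G where
  toFun := Prod.snd
  map_rel' h := (copyGraph_adj.1 h).2

/-- A proper colouring of `G` by rows embeds `G` into `R_m(G)`. -/
def Rm.homOfColoring (C : G.Coloring (Fin m)) : G →g Rm G m where
  toFun v := (C v, some v)
  map_rel' h := Rm_adj_some_some.2 ⟨C.valid h, h⟩

/-- The bag of `R_m(G)` consisting of all roots `(i, v₀)` and of the copies in `T`. -/
def rootedBag (T : Set (Fin m × V)) : Set (Fin m × Option V) :=
  {p | ∀ v, p.2 = some v → (p.1, v) ∈ T}

theorem none_mem_rootedBag {T : Set (Fin m × V)} (i : Fin m) : (i, none) ∈ rootedBag T := by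
  simp [rootedBag]

theorem some_mem_rootedBag {T : Set (Fin m × V)} {i : Fin m} {v : V} :
    (i, some v) ∈ rootedBag T ↔ (i, v) ∈ T := by
  simp [rootedBag]

theorem IsPathDecomp.rootedBag [Nonempty V] {s : ℕ} {T : Fin s → Set (Fin m × V)}
    (hT : IsPathDecomp (copyGraph G m) T) : IsPathDecomp (Rm G m) fun t => rootedBag (T t) := by
  refine ⟨?_, ?_, fun p t₁ t₂ t₃ h₁₂ h₂₃ h₁ h₃ v hv =>
    hT.2.2 _ t₁ t₂ t₃ h₁₂ h₂₃ (h₁ v hv) (h₃ v hv)⟩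
  · rintro ⟨i, _ | v⟩
    · obtain ⟨t, -⟩ := hT.1 (i, Classical.arbitrary V)
      exact ⟨t, none_mem_rootedBag i⟩
    · exact (hT.1 (i, v)).imp fun t => some_mem_rootedBag.2
  · rintro ⟨i, _ | u⟩ ⟨j, _ | v⟩ h
    · exact absurd h not_Rm_adj_none_none
    · exact (hT.1 (j, v)).imp fun t ht => ⟨none_mem_rootedBag i, some_mem_rootedBag.2 ht⟩
    · exact (hT.1 (i, u)).imp fun t ht => ⟨some_mem_rootedBag.2 ht, none_mem_rootedBag j⟩
    · exact (hT.2.1 (i, u) (j, v) h).imp fun t ht =>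
        ⟨some_mem_rootedBag.2 ht.1, some_mem_rootedBag.2 ht.2⟩

theorem colorable_rootedBag {T : Set (Fin m × V)} {c : ℕ}
    (h : ((copyGraph G m).induce T).Colorable c) :
    ((Rm G m).induce (rootedBag T)).Colorable (c + 1) := by
  obtain ⟨C⟩ := h
  let D : ((Rm G m).induce (rootedBag T)).Coloring (Option (Fin c)) := Coloring.mk
    (fun
      | ⟨(_, none), _⟩ => none
      | ⟨(i, some v), hv⟩ => some (C ⟨(i, v), some_mem_rootedBag.1 hv⟩)) <| by
      rintro ⟨⟨i, _ | u⟩, hu⟩ ⟨⟨j, _ | v⟩, hv⟩ huv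
      · exact absurd huv not_Rm_adj_none_none
      · exact (Option.some_ne_none _).symm
      · exact Option.some_ne_none _
      · exact (Option.some_injective _).ne (C.valid huv)
  simpa using D.colorable

/-- The new colour is used on row `i` and on the roots of all other rows. -/
theorem colorable_rootedBag_of_row {T : Set (Fin m × V)} {c : ℕ} (hc : 0 < c) (i : Fin m)
    (h : ((copyGraph G m).induce {p ∈ T | p.1 ≠ i}).Colorable c) :
    ((Rm G m).induce (rootedBag T)).Colorable (c + 1) := by
  obtain ⟨C⟩ := h
  let D : ((Rm G m).induce (rootedBag T)).Coloring (Option (Fin c)) := Coloring.mk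
    (fun
      | ⟨(j, none), _⟩ => if j = i then some ⟨0, hc⟩ else none
      | ⟨(j, some v), hv⟩ =>
        if hj : j = i then none else some (C ⟨(j, v), some_mem_rootedBag.1 hv, hj⟩)) <| by
      rintro ⟨⟨j, _ | u⟩, hu⟩ ⟨⟨j', _ | v⟩, hv⟩ huv
      · exact absurd huv not_Rm_adj_none_none
      · obtain rfl : j = j' := Rm_adj_none_some.1 huv
        by_cases hj : j = i <;> simp [hj]
      · obtain rfl : j = j' := Rm_adj_some_none.1 huv
        by_cases hj : j = i <;> simp [hj]
      · have hne : j ≠ j' := (Rm_adj_some_some.1 huv).1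
        by_cases hj : j = i <;> by_cases hj' : j' = i
        · exact absurd (hj.trans hj'.symm) hne
        · simp [hj, hj']
        · simp [hj, hj']
        · simpa [hj, hj'] using C.valid (show ((copyGraph G m).induce {p ∈ T | p.1 ≠ i}).Adj
            ⟨(j, u), some_mem_rootedBag.1 hu, hj⟩ ⟨(j', v), some_mem_rootedBag.1 hv, hj'⟩ from huv)
  simpa using D.colorable

theorem PathColorable.Rm_succ [Nonempty V] {k : ℕ} (h : PathColorable G k) :
    PathColorable (Rm G m) (k + 1) := by
  obtain ⟨s, T, hT, hcol⟩ := h.of_hom (copyGraph.snd G m)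
  exact ⟨s, _, hT.rootedBag, fun t => colorable_rootedBag (hcol t)⟩

end Rm

/-! ### From special enumerations to decompositions of `R_m(G)` -/

section Staggered

variable {n m : ℕ} {G : SimpleGraph V} {σ : Fin n ≃ V}

variable (G σ) in
/-- Every bag `X_ℓ` is repeated once for each row `i`. The bag with index `(ℓ, i)`, encoded in
`Fin (n * m)` in lexicographic order, contains all copies of the late vertices of `X_ℓ`, and the
copy in row `i` of the others (only `v_ℓ` can be one). -/
def staggeredBag (t : Fin (n * m)) : Set (Fin m × V) :=
  {p | p.2 ∈ bagX G σ t.divNat ∧ (IsLate G σ (σ.symm p.2) ∨ p.1 = t.modNat)}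

theorem exists_mem_staggeredBag (i : Fin m) (a : Fin n) :
    ∃ t, (i, σ a) ∈ staggeredBag G σ t ∧
      ∀ (j : Fin m) (b : Fin n), a < b → G.Adj (σ a) (σ b) → (j, σ b) ∈ staggeredBag G σ t := by
  obtain ⟨hdiv, hmod⟩ := Prod.ext_iff.1 (finProdFinEquiv.symm_apply_apply (a, i))
  simp only [finProdFinEquiv_symm_apply] at hdiv hmod
  refine ⟨finProdFinEquiv (a, i), ⟨?_, Or.inr hmod.symm⟩, fun j b hab hadj => ⟨?_, Or.inl ?_⟩⟩
  · simpa only [hdiv] using apply_mem_bagX_self a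
  · simpa only [hdiv] using apply_mem_bagX_iff.2 ⟨hab.le, Or.inr ⟨a, le_rfl, hadj⟩⟩
  · simpa only [Equiv.symm_apply_apply] using ⟨a, hab, hadj⟩

theorem eq_of_mem_staggeredBag {i : Fin m} {b : Fin n} (hb : ¬ IsLate G σ b) {t : Fin (n * m)}
    (h : (i, σ b) ∈ staggeredBag G σ t) : t = finProdFinEquiv (b, i) := by
  have hdiv : b = t.divNat := by_contra fun hne => hb (isLate_of_mem_bagX h.1 hne)
  have hmod : i = t.modNat := h.2.resolve_left (by simpa using hb)
  exact (finProdFinEquiv.symm_apply_eq).1 (Prod.ext hdiv.symm hmod.symm)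

theorem isPathDecomp_staggeredBag :
    IsPathDecomp (copyGraph G m) (staggeredBag G σ : Fin (n * m) → Set (Fin m × V)) := by
  refine ⟨?_, ?_, ?_⟩
  · rintro ⟨i, v⟩
    obtain ⟨a, rfl⟩ := σ.surjective v
    exact (exists_mem_staggeredBag i a).imp fun t ht => ht.1
  · rintro ⟨i, u⟩ ⟨j, v⟩ h
    obtain ⟨a, rfl⟩ := σ.surjective u
    obtain ⟨b, rfl⟩ := σ.surjective v
    have hadj := (copyGraph_adj.1 h).2
    rcases lt_or_gt_of_ne (ne_of_apply_ne σ hadj.ne) with hab | hba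
    · exact (exists_mem_staggeredBag i a).imp fun t ht => ⟨ht.1, ht.2 j b hab hadj⟩
    · exact (exists_mem_staggeredBag j b).imp fun t ht => ⟨ht.2 i a hba hadj.symm, ht.1⟩
  · rintro ⟨i, v⟩ t₁ t₂ t₃ h₁₂ h₂₃ h₁ h₃
    obtain ⟨b, rfl⟩ := σ.surjective v
    by_cases hb : IsLate G σ b
    · have hdiv {t t' : Fin (n * m)} (h : t ≤ t') : t.divNat ≤ t'.divNat := Nat.div_le_div_right h
      exact ⟨(isPathDecomp_bagX G σ).2.2 _ _ _ _ (hdiv h₁₂) (hdiv h₂₃) h₁.1 h₃.1,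
        Or.inl (by simpa using hb)⟩
    · have h₁₃ : t₁ = t₃ := (eq_of_mem_staggeredBag hb h₁).trans (eq_of_mem_staggeredBag hb h₃).symm
      exact le_antisymm h₁₂ (h₂₃.trans_eq h₁₃.symm) ▸ h₁

theorem pathColorable_Rm_of_colorable_bagX [Nonempty V] {c : ℕ} (hc : 0 < c)
    (h : ∀ ℓ, IsLate G σ ℓ → (G.induce (bagX G σ ℓ)).Colorable c) :
    PathColorable (Rm G m) (c + 1) := by
  refine ⟨n * m, _, (isPathDecomp_staggeredBag (σ := σ)).rootedBag, fun t => ?_⟩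
  refine colorable_rootedBag_of_row hc t.modNat ?_
  have hmaps : Set.MapsTo (copyGraph.snd G m) {p ∈ staggeredBag G σ t | p.1 ≠ t.modNat}
      (lateBag G σ t.divNat) :=
    fun _ ⟨⟨hbag, hlate⟩, hrow⟩ => ⟨hbag, hlate.resolve_right hrow⟩
  exact (colorable_lateBag h t.divNat).of_hom (induceHom (copyGraph.snd G m) hmaps)

end Staggered

/-! ### From decompositions of `R_m(G)` to special enumerations -/

namespace IsPathDecomp

variable {G : SimpleGraph V} {s : ℕ} {B : Fin s → Set V}

theorem exists_isLeast (hB : IsPathDecomp G B) (v : V) : ∃ t, IsLeast {t | v ∈ B t} t :=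
  (Set.toFinite _).isCompact.exists_isLeast (hB.1 v)

theorem exists_isGreatest (hB : IsPathDecomp G B) (v : V) : ∃ t, IsGreatest {t | v ∈ B t} t :=
  (Set.toFinite _).isCompact.exists_isGreatest (hB.1 v)

/-- The index of the first bag containing `v`. -/
noncomputable def first (hB : IsPathDecomp G B) (v : V) : Fin s := (hB.exists_isLeast v).choose

/-- The index of the last bag containing `v`. -/
noncomputable def last (hB : IsPathDecomp G B) (v : V) : Fin s := (hB.exists_isGreatest v).choose

variable (hB : IsPathDecomp G B)

theorem isLeast_first (v : V) : IsLeast {t | v ∈ B t} (hB.first v) :=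
  (hB.exists_isLeast v).choose_spec

theorem isGreatest_last (v : V) : IsGreatest {t | v ∈ B t} (hB.last v) :=
  (hB.exists_isGreatest v).choose_spec

theorem mem_iff_first_le_and_le_last {v : V} {t : Fin s} :
    v ∈ B t ↔ hB.first v ≤ t ∧ t ≤ hB.last v :=
  ⟨fun h => ⟨(hB.isLeast_first v).2 h, (hB.isGreatest_last v).2 h⟩,
    fun h => hB.2.2 v _ t _ h.1 h.2 (hB.isLeast_first v).1 (hB.isGreatest_last v).1⟩

theorem first_le_last (v : V) : hB.first v ≤ hB.last v :=
  (hB.isLeast_first v).2 (hB.isGreatest_last v).1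

theorem first_le_last_of_adj {u v : V} (huv : G.Adj u v) : hB.first u ≤ hB.last v := by
  obtain ⟨t, hu, hv⟩ := hB.2.1 u v huv
  exact ((hB.isLeast_first u).2 hu).trans ((hB.isGreatest_last v).2 hv)

end IsPathDecomp

theorem exists_equiv_monotone_comp {α : Type*} [LinearOrder α] [Fintype V] {n : ℕ}
    (hn : Fintype.card V = n) (f : V → α) : ∃ σ : Fin n ≃ V, Monotone (f ∘ σ) :=
  let τ := (Fintype.equivFinOfCardEq hn).symm
  ⟨(Tuple.sort (f ∘ τ)).trans τ, Tuple.monotone_sort (f ∘ τ)⟩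

section LowerBound

variable {m : ℕ} {G : SimpleGraph V}

open Finset in
theorem IsPathDecomp.exists_enumeration_box_subset [Fintype V] {n s : ℕ}
    {B : Fin s → Set (Fin m × Option V)} (hB : IsPathDecomp (Rm G m) B)
    (hn : Fintype.card V = n) (hm : 0 < m) :
    ∃ σ : Fin n ≃ V, ∀ ℓ, IsLate G σ ℓ →
      ∃ I : Finset (Fin m), #I ≤ ℓ + 1 ∧ ∃ t, box ↑Iᶜ (bagX G σ ℓ) ⊆ B t := by
  have : Nonempty (Fin m) := ⟨⟨0, hm⟩⟩
  choose ι hι using fun v => Finite.exists_min fun i : Fin m => hB.last (i, some v)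
  obtain ⟨σ, hσ⟩ := exists_equiv_monotone_comp hn fun v => hB.last (ι v, some v)
  refine ⟨σ, fun ℓ hℓ => ⟨(Iic ℓ).image (ι ∘ σ), card_image_le.trans (by simp),
    hB.last (ι (σ ℓ), some (σ ℓ)), ?_⟩⟩
  rintro ⟨j, _⟩ ⟨hj, w, hw, rfl⟩
  obtain ⟨b, rfl⟩ := σ.surjective w
  obtain ⟨a, ha, hab⟩ := hℓ.exists_adj_of_mem_bagX hw
  have hja : j ≠ ι (σ a) := by
    rintro rfl
    exact (mem_compl.1 (mem_coe.1 hj)) (mem_image_of_mem (ι ∘ σ) (mem_Iic.2 ha))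
  rw [hB.mem_iff_first_le_and_le_last]
  constructor
  · calc hB.first (j, some (σ b))
        ≤ hB.last (ι (σ a), some (σ a)) :=
          hB.first_le_last_of_adj (Rm_adj_some_some.2 ⟨hja, hab.symm⟩)
      _ ≤ hB.last (ι (σ ℓ), some (σ ℓ)) := hσ ha
  · calc hB.last (ι (σ ℓ), some (σ ℓ))
        ≤ hB.last (ι (σ b), some (σ b)) := hσ (apply_mem_bagX_iff.1 hw).1
      _ ≤ hB.last (j, some (σ b)) := hι (σ b) j

open Finset in
/-- Move from the given bag to the last root that ends before it or to the first root that starts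
after it, whichever side has more rows. -/
theorem IsPathDecomp.exists_root_mem_box_subset {s : ℕ} {B : Fin s → Set (Fin m × Option V)}
    (hB : IsPathDecomp (Rm G m) B) {J : Finset (Fin m)} {X : Set V} {t : Fin s}
    (hX : box J X ⊆ B t) {k : ℕ} (hJ : 2 * k < #J) :
    ∃ I : Finset (Fin m), k < #I ∧ ∃ i ∈ I, ∃ t', (i, none) ∈ B t' ∧ box I X ⊆ B t' := by
  have hmem {j : Fin m} (hj : j ∈ J) {w : V} (hw : w ∈ X) :
      hB.first (j, some w) ≤ t ∧ t ≤ hB.last (j, some w) :=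
    hB.mem_iff_first_le_and_le_last.1 (hX ⟨hj, w, hw, rfl⟩)
  have hsplit := card_filter_add_card_filter_not (s := J) fun j => hB.last (j, none) ≤ t
  rcases (by omega : k < #{j ∈ J | hB.last (j, none) ≤ t} ∨
    k < #{j ∈ J | ¬ hB.last (j, none) ≤ t}) with hcard | hcard
  · obtain ⟨i, hi, hmax⟩ := exists_max_image {j ∈ J | hB.last (j, none) ≤ t}
      (fun j => hB.last (j, none)) (card_pos.1 (by omega))
    refine ⟨_, hcard, i, hi, hB.last (i, none), (hB.isGreatest_last _).1, ?_⟩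
    rintro ⟨j, _⟩ ⟨hj, w, hw, rfl⟩
    have hjw := hmem (mem_filter.1 hj).1 hw
    exact hB.mem_iff_first_le_and_le_last.2
      ⟨(hB.first_le_last_of_adj (Rm_adj_some_none.2 rfl)).trans (hmax j hj),
        (mem_filter.1 hi).2.trans hjw.2⟩
  · obtain ⟨i, hi, hmin⟩ := exists_min_image {j ∈ J | ¬ hB.last (j, none) ≤ t}
      (fun j => hB.first (j, none)) (card_pos.1 (by omega))
    refine ⟨_, hcard, i, hi, max t (hB.first (i, none)), ?_, ?_⟩
    · exact hB.mem_iff_first_le_and_le_last.2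
        ⟨le_max_right _ _, max_le (not_le.1 (mem_filter.1 hi).2).le (hB.first_le_last _)⟩
    · rintro ⟨j, _⟩ ⟨hj, w, hw, rfl⟩
      have hjw := hmem (mem_filter.1 hj).1 hw
      exact hB.mem_iff_first_le_and_le_last.2 ⟨hjw.1.trans (le_max_left _ _),
        max_le hjw.2 ((hmin j hj).trans (hB.first_le_last_of_adj (Rm_adj_none_some.2 rfl)))⟩

section Colors

variable {α : Type*} {B : Set (Fin m × Option V)} (C : ((Rm G m).induce B).Coloring α)

/-- The colours of the copies of `v` in the bag `B`. -/
def copyColors (v : V) : Set α := {x | ∃ i, ∃ h : (i, some v) ∈ B, C ⟨_, h⟩ = x}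

/-- The colours that at least two copies of `v` in the bag `B` receive. -/
def repeatedColors (v : V) : Set α :=
  {x | ∃ i j, i ≠ j ∧ (∃ h : (i, some v) ∈ B, C ⟨_, h⟩ = x) ∧ ∃ h : (j, some v) ∈ B, C ⟨_, h⟩ = x}

variable {C}

theorem repeatedColors_subset_copyColors {v : V} : repeatedColors C v ⊆ copyColors C v :=
  fun _ ⟨i, _, _, hi, _⟩ => ⟨i, hi⟩

/-- One of the two copies of `u` lies outside the row of the copy of `v`. -/
theorem disjoint_repeatedColors_copyColors {u v : V} (huv : G.Adj u v) :
    Disjoint (repeatedColors C u) (copyColors C v) := by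
  rw [Set.disjoint_left]
  rintro x ⟨i, j, hij, ⟨hi, hix⟩, hj, hjx⟩ ⟨l, hl, hlx⟩
  by_cases hil : i = l
  · exact C.valid (v := ⟨_, hj⟩) (w := ⟨_, hl⟩)
      (Rm_adj_some_some.2 ⟨hil ▸ hij.symm, huv⟩) (hjx.trans hlx.symm)
  · exact C.valid (v := ⟨_, hi⟩) (w := ⟨_, hl⟩) (Rm_adj_some_some.2 ⟨hil, huv⟩) (hix.trans hlx.symm)

theorem repeatedColors_nonempty [Fintype α] {J : Finset (Fin m)} (hJ : Fintype.card α < J.card)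
    {v : V} (hv : ∀ j ∈ J, (j, some v) ∈ B) : (repeatedColors C v).Nonempty := by
  obtain ⟨i, j, hij, heq⟩ := Fintype.exists_ne_map_eq_of_card_lt
    (fun j : J => C ⟨(j, some v), hv j j.2⟩) (by simpa using hJ)
  exact ⟨_, i, j, Subtype.coe_ne_coe.2 hij, ⟨hv i i.2, heq⟩, hv j j.2, rfl⟩

/-- A vertex whose only repeated colour is that of the root takes the colour of its copy in the
row of the root. Adjacent vertices cannot both be in this situation. -/
theorem exists_coloring_ne_root [Fintype α] {J : Finset (Fin m)} (hJ : Fintype.card α < J.card)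
    {X : Set V} (hX : box J X ⊆ B) {i : Fin m} (hi : i ∈ J) (hroot : (i, none) ∈ B) :
    Nonempty ((G.induce X).Coloring {x // x ≠ C ⟨_, hroot⟩}) := by
  have hchoice (v : X) : ∃ x : {x // x ≠ C ⟨_, hroot⟩}, x.1 ∈ copyColors C v.1 ∧
      (x.1 ∈ repeatedColors C v.1 ∨ C ⟨_, hroot⟩ ∈ repeatedColors C v.1) := by
    have hcopies (j : Fin m) (hj : j ∈ J) : (j, some v.1) ∈ B := hX ⟨hj, v, v.2, rfl⟩
    obtain ⟨x, hx⟩ := repeatedColors_nonempty (C := C) hJ hcopies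
    by_cases hne : x = C ⟨_, hroot⟩
    · exact ⟨⟨C ⟨_, hcopies i hi⟩, C.valid (Rm_adj_some_none.2 rfl)⟩, ⟨i, hcopies i hi, rfl⟩,
        Or.inr (hne ▸ hx)⟩
    · exact ⟨⟨x, hne⟩, repeatedColors_subset_copyColors hx, Or.inl hx⟩
  choose g hcopy hrep using hchoice
  refine ⟨Coloring.mk g fun {u v} huv heq => ?_⟩
  have hadj : G.Adj u.1 v.1 := huv
  have hcopy_v : (g u).1 ∈ copyColors C v.1 := heq ▸ hcopy v
  have hcopy_u : (g v).1 ∈ copyColors C u.1 := heq ▸ hcopy u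
  rcases hrep u with hu | hu
  · exact (disjoint_repeatedColors_copyColors hadj).notMem_of_mem_left hu hcopy_v
  rcases hrep v with hv | hv
  · exact (disjoint_repeatedColors_copyColors hadj.symm).notMem_of_mem_left hv hcopy_u
  · exact (disjoint_repeatedColors_copyColors hadj).notMem_of_mem_left hu
      (repeatedColors_subset_copyColors hv)

end Colors

open Finset in
theorem IsPathDecomp.colorable_of_box_subset {s : ℕ} {B : Fin s → Set (Fin m × Option V)}
    (hB : IsPathDecomp (Rm G m) B) {c : ℕ}
    (hcol : ∀ t, ((Rm G m).induce (B t)).Colorable (c + 1)) {J : Finset (Fin m)}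
    (hJ : 2 * (c + 1) < #J) {X : Set V} {t : Fin s} (hX : box J X ⊆ B t) :
    (G.induce X).Colorable c := by
  obtain ⟨I, hI, i, hi, t', hroot, hIX⟩ := hB.exists_root_mem_box_subset hX hJ
  obtain ⟨C⟩ := hcol t'
  obtain ⟨D⟩ := exists_coloring_ne_root (C := C) (by simpa using hI) hIX hi hroot
  simpa using D.colorable

theorem exists_colorable_bagX_of_pathColorable_Rm [Fintype V] {n c : ℕ}
    (hn : Fintype.card V = n) (hm : n + c + 3 ≤ m) (h : PathColorable (Rm G m) (c + 1)) :
    ∃ σ : Fin n ≃ V, ∀ ℓ, IsLate G σ ℓ → (G.induce (bagX G σ ℓ)).Colorable c := by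
  obtain ⟨s, B, hB, hcol⟩ := h
  obtain ⟨σ, hσ⟩ := hB.exists_enumeration_box_subset hn (by omega)
  refine ⟨σ, fun ℓ hℓ => ?_⟩
  rcases le_or_gt (n - ℓ) c with hsmall | hlarge
  · exact (colorable_bagX_sub ℓ).mono hsmall
  · obtain ⟨I, hI, t, hX⟩ := hσ ℓ hℓ
    refine hB.colorable_of_box_subset hcol ?_ hX
    rw [Finset.card_compl, Fintype.card_fin]
    omega

end LowerBound

theorem pathColorable_Rm_iff_exists_isSpecial [Fintype V] [Nonempty V] {G : SimpleGraph V}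
    {n c m : ℕ} (hn : Fintype.card V = n) (hc : 0 < c) (hG : pathChromatic G = c + 1)
    (hm : n + c + 3 ≤ m) :
    PathColorable (Rm G m) (c + 1) ↔ ∃ σ : Fin n ≃ V, IsSpecial G σ := by
  simp only [isSpecial_iff hG]
  exact ⟨exists_colorable_bagX_of_pathColorable_Rm hn hm,
    fun ⟨_, hσ⟩ => pathColorable_Rm_of_colorable_bagX hc hσ⟩

/-- Theorem 2: for `k ≥ 2`, `m ≥ n + k + 2` and `G` with `χ_P(G) = k`, `|V(G)| = n`:
`χ_P(R_m(G)) = k` if `G` has a special enumeration, and `χ_P(R_m(G)) = k + 1` otherwise. -/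
theorem stmt_10 {V : Type u} [Fintype V] (G : SimpleGraph V) {n k m : ℕ}
    (hn : Fintype.card V = n) (hn1 : 1 ≤ n) (hk : 2 ≤ k)
    (hG : pathChromatic G = k) (hm : n + k + 2 ≤ m) :
    ((∃ σ : Fin n ≃ V, IsSpecial G σ) → pathChromatic (Rm G m) = k) ∧
    ((¬ ∃ σ : Fin n ≃ V, IsSpecial G σ) → pathChromatic (Rm G m) = k + 1) := by
  obtain ⟨c, rfl⟩ : ∃ c, k = c + 1 := ⟨k - 1, by omega⟩
  have : Nonempty V := Fintype.card_pos_iff.1 (by omega)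
  have hlower : c + 1 ≤ pathChromatic (Rm G m) := by
    obtain ⟨C⟩ : G.Colorable m := G.colorable_of_fintype.mono (by omega)
    rw [← hG, pathChromatic_le_iff]
    exact (pathChromatic_le_iff.1 le_rfl).of_hom (Rm.homOfColoring C)
  have hupper : pathChromatic (Rm G m) ≤ c + 1 + 1 :=
    pathChromatic_le_iff.2 (pathChromatic_le_iff.1 hG.le).Rm_succ
  rw [← pathColorable_Rm_iff_exists_isSpecial hn (by omega) hG (by omega), ← pathChromatic_le_iff]
  omega
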